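/- Let G be a complete multipartite graph on n vertices with at least one edge. Then depth(R/I(G)) = 1; equivalently, pd_R(R/I(G)) = n − 1 (so that, by Terai's formula, reg(R/J(G)) = n − 2). -/

import Mathlib

open MvPolynomial CategoryTheory

noncomputable section

/-- A set of vertices is a vertex cover if it meets every edge. -/
def IsVertexCover {V : Type} (G : SimpleGraph V) (C : Set V) : Prop :=
  ∀ ⦃u v : V⦄, G.Adj u v → u ∈ C ∨ v ∈ C

/-- A vertex cover minimal with respect to inclusion. -/
def IsMinimalVertexCover {V : Type} (G : SimpleGraph V) (C : Set V) : Prop :=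
  IsVertexCover G C ∧ ∀ C' ⊆ C, IsVertexCover G C' → C' = C

/-- `α₀(G)`: the minimum cardinality of a vertex cover of `G`. -/
def coverNumber {V : Type} (G : SimpleGraph V) : ℕ :=
  sInf {k | ∃ C : Set V, IsVertexCover G C ∧ C.ncard = k}

/-- `bight(I(G))`: the maximum cardinality of a minimal vertex cover of `G`. -/
def bigHeight {V : Type} (G : SimpleGraph V) : ℕ :=
  sSup {k | ∃ C : Set V, IsMinimalVertexCover G C ∧ C.ncard = k}

/-- The edge ideal `I(G) ⊆ K[x_v : v ∈ V]`, generated by the monomials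
`x_u * x_v` over the edges `{u,v}` of `G`. -/
def edgeIdeal (K : Type) [Field K] {V : Type} (G : SimpleGraph V) :
    Ideal (MvPolynomial V K) :=
  Ideal.span {m | ∃ u v : V, G.Adj u v ∧ m = X u * X v}

/-- The cover ideal `J(G) = ⋂_{{u,v} ∈ E(G)} ⟨x_u, x_v⟩`. -/
def coverIdeal (K : Type) [Field K] {V : Type} (G : SimpleGraph V) :
    Ideal (MvPolynomial V K) :=
  ⨅ (u : V) (v : V) (_ : G.Adj u v), Ideal.span {X u, X v}

/-- The v-number of a graded ideal `I`: the least `d ≥ 0` such that there is a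
homogeneous polynomial `f` of degree `d` with `I : f` a prime ideal. -/
def vNumber {K : Type} [Field K] {V : Type} (I : Ideal (MvPolynomial V K)) : ℕ :=
  sInf {d | ∃ f : MvPolynomial V K, f.IsHomogeneous d ∧
    (I.colon (Ideal.span {f})).IsPrime}

/-- The homogeneous maximal ideal `⟨x_1, …, x_n⟩` of the polynomial ring. -/
def maxIdeal (K : Type) [Field K] (V : Type) : Ideal (MvPolynomial V K) :=
  Ideal.span (Set.range (X : V → MvPolynomial V K))

/-- The depth of the module `M` with respect to the ideal `J`: the supremum of
the lengths of regular sequences on `M` consisting of elements of `J`. -/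
def mdepth {R : Type} [CommRing R] (J : Ideal R) (M : Type) [AddCommGroup M]
    [Module R M] : ℕ :=
  sSup {k | ∃ rs : List R, rs.length = k ∧ (∀ r ∈ rs, r ∈ J) ∧
    RingTheory.Sequence.IsRegular M rs}

/-- The projective dimension of an `R`-module `M`, characterized by the
vanishing of `Ext^i(M, N)` for all `i > d` and all modules `N`. -/
def projDim (R : Type) [CommRing R] (M : ModuleCat.{0} R) : ℕ :=
  sInf {d : ℕ | ∀ (N : ModuleCat.{0} R) (i : ℕ), d < i →
    Subsingleton (((Ext R (ModuleCat.{0} R) i).obj (Opposite.op M)).obj N)}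

/-- A graph is complete multipartite if its vertex set admits a partition into
nonempty parts, each part inducing an empty graph, with any two vertices in
distinct parts adjacent. -/
def IsCompleteMultipartite {V : Type} (G : SimpleGraph V) : Prop :=
  ∃ (k : ℕ) (P : Fin k → Set V),
    (∀ i, (P i).Nonempty) ∧
    (∀ v : V, ∃! i, v ∈ P i) ∧
    (∀ i, ∀ u ∈ P i, ∀ v ∈ P i, ¬ G.Adj u v) ∧
    (∀ i j, i ≠ j → ∀ u ∈ P i, ∀ v ∈ P j, G.Adj u v)

/-!
For a complete multipartite graph with parts `V_1, …, V_k` the minimal vertex covers are the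
complements of the parts, so `I(G) = P_1 ∩ ⋯ ∩ P_k`, where `P_i` is generated by the variables
outside `V_i`. Split off one component: with `B = P_2 ∩ ⋯ ∩ P_k`, every variable lies in `P_1` or
in `B`, so `P_1 + B = 𝔪` and there is a Mayer–Vietoris sequence
`0 ⟶ R/I(G) ⟶ R/P_1 × R/B ⟶ R/𝔪 ⟶ 0`.

* Depth: some variable is regular on each `R/P_i`, so `Hom(R/𝔪, R/P_i) = 0`, and by left exactness
  `Hom(R/𝔪, R/I(G)) = 0` and `Hom(R/𝔪, R/P_1 × R/B) = 0`. Hence the sequence cannot split, its class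
  in `Ext¹(R/𝔪, R/I(G))` is nonzero, and the Ext characterization of depth gives depth one.
* Projective dimension: adding the variables one at a time gives `pd R/𝔪 = n`, while
  `pd R/P_i ≤ n - 1` and inductively `pd R/B ≤ n - 1`; the sequence forces `pd R/I(G) = n - 1`.
-/

section Abelian

universe w v u

variable {C : Type u} [Category.{v} C] [Abelian C]

lemma subsingleton_ext_succ_iff (R : Type*) [Ring R] [Linear R C] [EnoughProjectives C]
    [HasExt.{w} C] (X Y : C) (n : ℕ) :
    Subsingleton (((Ext R C (n + 1)).obj (Opposite.op X)).obj Y) ↔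
      Subsingleton (Abelian.Ext.{w} X Y (n + 1)) := by
  let P := projectiveResolution X
  have extMk_eq_zero (f : P.complex.X (n + 1) ⟶ Y) (hf : P.complex.d (n + 2) (n + 1) ≫ f = 0) :
      P.extMk f (n + 2) rfl hf = 0 ↔ ∃ g : P.complex.X n ⟶ Y, P.complex.d (n + 1) n ≫ g = f :=
    P.extMk_eq_zero_iff f (n + 2) rfl hf n rfl
  rw [← ModuleCat.isZero_iff_subsingleton, (P.isoExt (R := R) (n + 1) Y).isZero_iff,
    ← HomologicalComplex.exactAt_iff_isZero_homology,
    HomologicalComplex.exactAt_iff' _ n (n + 1) (n + 2) (by simp) (by simp),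
    ShortComplex.moduleCat_exact_iff]
  constructor
  · refine fun h ↦ subsingleton_of_forall_eq 0 fun e ↦ ?_
    obtain ⟨f, hf, rfl⟩ := P.extMk_surjective e (n + 2) rfl
    exact (extMk_eq_zero f hf).2 (h f hf)
  · exact fun h f hf ↦ (extMk_eq_zero f hf).1 (Subsingleton.elim _ _)

lemma projectiveDimension_X₁_eq {S : ShortComplex C} (hS : S.ShortExact) {n : ℕ}
    (h₂ : HasProjectiveDimensionLE S.X₂ n)
    (h₃ : projectiveDimension S.X₃ = (n + 1 : ℕ)) : projectiveDimension S.X₁ = n := by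
  refine le_antisymm ?_ ?_
  · rw [projectiveDimension_le_iff]
    exact hS.hasProjectiveDimensionLT_X₁ (n + 1) h₂ ((projectiveDimension_le_iff _ _).1 h₃.le)
  · rw [projectiveDimension_ge_iff]
    intro h₁
    exact (projectiveDimension_ge_iff _ _).1 h₃.ge (hS.hasProjectiveDimensionLT_X₃ n h₁ h₂)

lemma subsingleton_hom_X₁ {S : ShortComplex C} (hS : S.ShortExact) {N : C}
    (h : Subsingleton (N ⟶ S.X₂)) : Subsingleton (N ⟶ S.X₁) :=
  have := hS.mono_f
  ⟨fun _ _ ↦ (cancel_mono S.f).1 (h.elim _ _)⟩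

variable [HasExt.{w} C]

lemma extClass_ne_zero {S : ShortComplex C} (hS : S.ShortExact) (h₃ : ¬ Limits.IsZero S.X₃)
    (hom : Subsingleton (S.X₃ ⟶ S.X₂)) : hS.extClass ≠ 0 := by
  intro h
  obtain ⟨e, he⟩ := Abelian.Ext.covariant_sequence_exact₃ S.X₃ hS
    (Abelian.Ext.mk₀ (𝟙 S.X₃)) rfl (by rw [Abelian.Ext.mk₀_id_comp, h])
  obtain ⟨s, rfl⟩ := (Abelian.Ext.mk₀_bijective _ _).2 e
  refine h₃ ((Limits.IsZero.iff_id_eq_zero _).2 ?_)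
  rw [← Abelian.Ext.mk₀_eq_zero_iff, ← he, Subsingleton.elim s 0]
  simp

lemma nontrivial_ext_succ {R : Type*} [Ring R] [Linear R C] {r : R} {X Y N : C} {g : X ⟶ Y}
    {w : (r • 𝟙 X) ≫ g = 0} (hS : (ShortComplex.mk (r • 𝟙 X) g w).ShortExact)
    (hN : r • 𝟙 N = 0) {n : ℕ} (h : Nontrivial (Abelian.Ext X N n)) :
    Nontrivial (Abelian.Ext Y N (n + 1)) := by
  -- Since `r` kills `N`, the connecting map `Extⁿ(X, N) → Extⁿ⁺¹(Y, N)` is injective.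
  obtain ⟨e, he⟩ := exists_ne (0 : Abelian.Ext X N n)
  refine ⟨hS.extClass.comp e (add_comm _ _), 0, fun h0 ↦ he ?_⟩
  obtain ⟨e', rfl⟩ := Abelian.Ext.contravariant_sequence_exact₁ hS _ e (add_comm _ _) h0
  dsimp only
  rw [Abelian.Ext.mk₀_smul, Abelian.Ext.smul_comp, Abelian.Ext.mk₀_id_comp,
    Abelian.Ext.smul_eq_comp_mk₀, hN, Abelian.Ext.mk₀_zero, Abelian.Ext.comp_zero]

end Abelian

lemma projDim_eq_of_projectiveDimension_eq {R : Type} [CommRing R] {M : ModuleCat.{0} R} {d : ℕ}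
    (h : projectiveDimension M = d) : projDim R M = d := by
  have ext_vanishing_iff (e : ℕ) :
      (∀ (N : ModuleCat.{0} R) (i : ℕ), e < i →
        Subsingleton (((Ext R (ModuleCat.{0} R) i).obj (Opposite.op M)).obj N)) ↔ d ≤ e := by
    rw [← Nat.cast_le (α := WithBot ℕ∞), ← h, projectiveDimension_le_iff,
      HasProjectiveDimensionLE, hasProjectiveDimensionLT_iff.{0}]
    refine ⟨fun H i hi Y x ↦ ?_, fun H N i hi ↦ ?_⟩ <;>
      obtain ⟨j, rfl⟩ := Nat.exists_eq_add_one_of_ne_zero (by omega : i ≠ 0)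
    · have := (subsingleton_ext_succ_iff R M Y j).1 (H Y _ hi)
      exact Subsingleton.elim x 0
    · exact (subsingleton_ext_succ_iff R M N j).2 (subsingleton_of_forall_eq 0 fun x ↦ H _ hi x)
  simp only [projDim, ext_vanishing_iff]
  exact csInf_Ici

lemma mdepth_eq_of_ext {R : Type} [CommRing R] [IsNoetherianRing R] {J : Ideal R} {M : Type}
    [AddCommGroup M] [Module R M] [Module.Finite R M] (hJM : J • (⊤ : Submodule R M) ≠ ⊤) {d : ℕ}
    (vanish : ∀ i < d, Subsingleton (Abelian.Ext (ModuleCat.of R (R ⧸ J)) (ModuleCat.of R M) i))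
    (nonvanish : Nontrivial (Abelian.Ext (ModuleCat.of R (R ⧸ J)) (ModuleCat.of R M) d)) :
    mdepth J M = d := by
  have support_quotient : Module.support R (R ⧸ J) = PrimeSpectrum.zeroLocus J := by
    rw [Module.support_eq_zeroLocus, Ideal.annihilator_quotient]
  refine IsGreatest.csSup_eq ⟨?_, ?_⟩
  · exact ModuleCat.exists_isRegular_of_exists_subsingleton_ext J d (ModuleCat.of R M)
      hJM.lt_top (ModuleCat.of R (R ⧸ J)) support_quotient vanish
  · rintro _ ⟨rs, rfl, mem, reg⟩
    by_contra! hlt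
    exact not_subsingleton_iff_nontrivial.2 nonvanish <|
      ModuleCat.subsingleton_ext_of_exists_isRegular J (ModuleCat.of R (R ⧸ J))
        support_quotient.subset (ModuleCat.of R M) hJM.lt_top rs mem reg d hlt

section Quotients

universe u

section Ring

variable {R : Type*} [Ring R] {M : Type u} [AddCommGroup M] [Module R M]

lemma factor_prod_factor_injective (p q : Submodule R M) :
    Function.Injective ((Submodule.factor inf_le_left).prod (Submodule.factor inf_le_right) :
      M ⧸ p ⊓ q →ₗ[R] (M ⧸ p) × (M ⧸ q)) := by
  rw [injective_iff_map_eq_zero, (Submodule.mkQ_surjective _).forall]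
  simp

lemma factor_coprod_neg_factor_surjective (p q : Submodule R M) :
    Function.Surjective ((Submodule.factor le_sup_left).coprod (-Submodule.factor le_sup_right) :
      (M ⧸ p) × (M ⧸ q) →ₗ[R] M ⧸ p ⊔ q) := by
  rw [Function.Surjective, (Submodule.mkQ_surjective _).forall]
  exact fun y ↦ ⟨(Submodule.Quotient.mk y, 0), by simp⟩

lemma exact_factor_prod_factor_coprod_neg_factor (p q : Submodule R M) :
    Function.Exact
      ((Submodule.factor inf_le_left).prod (Submodule.factor inf_le_right) :
        M ⧸ p ⊓ q →ₗ[R] (M ⧸ p) × (M ⧸ q))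
      ((Submodule.factor le_sup_left).coprod (-Submodule.factor le_sup_right) :
        (M ⧸ p) × (M ⧸ q) →ₗ[R] M ⧸ p ⊔ q) := by
  rintro ⟨y, z⟩
  obtain ⟨y, rfl⟩ := Submodule.mkQ_surjective _ y
  obtain ⟨z, rfl⟩ := Submodule.mkQ_surjective _ z
  have mem_sup : y - z ∈ p ⊔ q ↔ ∃ w, w - y ∈ p ∧ w - z ∈ q := by
    rw [Submodule.mem_sup]
    constructor
    · rintro ⟨a, ha, b, hb, hab⟩
      refine ⟨y - a, by simpa using ha, ?_⟩
      rwa [sub_right_comm, ← hab, add_sub_cancel_left]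
    · rintro ⟨w, hy, hz⟩
      exact ⟨y - w, sub_mem_comm_iff.1 hy, w - z, hz, sub_add_sub_cancel ..⟩
  rw [Set.mem_range, (Submodule.mkQ_surjective _).exists]
  simpa [← sub_eq_add_neg, ← Submodule.Quotient.mk_sub, Submodule.Quotient.mk_eq_zero,
    Submodule.Quotient.eq] using mem_sup

/-- The Mayer–Vietoris short complex `M ⧸ p ⊓ q ⟶ (M ⧸ p) × (M ⧸ q) ⟶ M ⧸ p ⊔ q`, the second map
being the difference of the two projections. -/
def mayerVietoris (p q : Submodule R M) : ShortComplex (ModuleCat.{u} R) :=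
  ModuleCat.shortComplexOfCompEqZero _ _
    (exact_factor_prod_factor_coprod_neg_factor p q).linearMap_comp_eq_zero

lemma mayerVietoris_shortExact (p q : Submodule R M) : (mayerVietoris p q).ShortExact :=
  ModuleCat.shortComplex_shortExact _ (exact_factor_prod_factor_coprod_neg_factor p q)
    (factor_prod_factor_injective p q) (factor_coprod_neg_factor_surjective p q)

end Ring

variable {R : Type u} [CommRing R]

lemma exact_lsmul_factor (I : Ideal R) (x : R) :
    Function.Exact (LinearMap.lsmul R (R ⧸ I) x)
      (Submodule.factor (le_sup_left : I ≤ I ⊔ Ideal.span {x})) := by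
  rw [Function.Exact, (Submodule.mkQ_surjective _).forall]
  intro y
  have mem_sup : y ∈ I ⊔ Ideal.span {x} ↔ ∃ c, x * c - y ∈ I := by
    simp_rw [Submodule.mem_sup, Ideal.mem_span_singleton']
    constructor
    · rintro ⟨a, ha, _, ⟨c, rfl⟩, rfl⟩
      exact ⟨c, by simpa [mul_comm x c] using ha⟩
    · rintro ⟨c, hc⟩
      exact ⟨y - x * c, sub_mem_comm_iff.1 hc, x * c, ⟨c, mul_comm c x⟩, sub_add_cancel ..⟩
  rw [Set.mem_range, (Submodule.mkQ_surjective _).exists]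
  simpa only [Submodule.mkQ_apply, Submodule.factor, Submodule.mapQ_apply, LinearMap.id_apply,
    LinearMap.lsmul_apply, ← Submodule.Quotient.mk_smul, Submodule.Quotient.mk_eq_zero,
    Submodule.Quotient.eq, smul_eq_mul] using mem_sup

/-- The short complex `R ⧸ I ⟶ R ⧸ I ⟶ R ⧸ (I ⊔ ⟨x⟩)` whose first map is multiplication by `x`,
used to pass from the quotient by `I` to the quotient by one more generator. -/
def mulQuotient (I : Ideal R) (x : R) : ShortComplex (ModuleCat.{u} R) :=
  ModuleCat.shortComplexOfCompEqZero _ _ (exact_lsmul_factor I x).linearMap_comp_eq_zero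

lemma mulQuotient_shortExact {I : Ideal R} {x : R} (hx : IsSMulRegular (R ⧸ I) x) :
    (mulQuotient I x).ShortExact :=
  ModuleCat.shortComplex_shortExact _ (exact_lsmul_factor I x) hx
    (Submodule.factor_surjective le_sup_left)

lemma hasProjectiveDimensionLE_quotient_sup_span {I : Ideal R} {x : R}
    (hx : IsSMulRegular (R ⧸ I) x) {n : ℕ}
    (h : HasProjectiveDimensionLE (ModuleCat.of R (R ⧸ I)) n) :
    HasProjectiveDimensionLE (ModuleCat.of R (R ⧸ I ⊔ Ideal.span {x})) (n + 1) := by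
  have h' : HasProjectiveDimensionLE (ModuleCat.of R (R ⧸ I)) (n + 1) :=
    hasProjectiveDimensionLT_of_ge _ (n + 1) _ (Nat.le_succ _)
  exact (mulQuotient_shortExact hx).hasProjectiveDimensionLT_X₃ (n + 1) h h'

lemma hasProjectiveDimensionLE_prod {M₁ M₂ : Type u} [AddCommGroup M₁] [Module R M₁]
    [AddCommGroup M₂] [Module R M₂] (n : ℕ)
    [HasProjectiveDimensionLE (ModuleCat.of R M₁) n]
    [HasProjectiveDimensionLE (ModuleCat.of R M₂) n] :
    HasProjectiveDimensionLE (ModuleCat.of R (M₁ × M₂)) n :=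
  hasProjectiveDimensionLT_of_iso (ModuleCat.biprodIsoProd (.of R M₁) (.of R M₂)) (n + 1)

lemma smul_top_quotient_ne_top {I J : Ideal R} (hIJ : I ≤ J) (hJ : J ≠ ⊤) :
    J • (⊤ : Submodule R (R ⧸ I)) ≠ ⊤ := by
  rw [Ideal.smul_top_eq_map, Ne, Submodule.restrictScalars_eq_top_iff]
  intro h
  rw [← Ideal.comap_map_mk hIJ, ← Ideal.Quotient.algebraMap_eq, h, Ideal.comap_top] at hJ
  exact hJ rfl

lemma smul_id_quotient_eq_zero {J : Ideal R} {x : R} (hx : x ∈ J) :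
    x • 𝟙 (ModuleCat.of R (R ⧸ J)) = 0 := by
  refine ModuleCat.hom_ext (LinearMap.ext fun y ↦ ?_)
  obtain ⟨y, rfl⟩ := Submodule.mkQ_surjective _ y
  exact (Submodule.Quotient.mk_eq_zero J).2 (J.mul_mem_right y hx)

lemma subsingleton_hom_of_isSMulRegular {N M : ModuleCat.{u} R} {x : R} (hN : x • 𝟙 N = 0)
    (hM : IsSMulRegular M x) : Subsingleton (N ⟶ M) := by
  refine subsingleton_of_forall_eq 0 fun f ↦ ModuleCat.hom_ext (LinearMap.ext fun y ↦ hM ?_)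
  have : x • y = 0 := congr($hN y)
  simp [← map_smul, this]

lemma subsingleton_hom_prod {N : ModuleCat.{u} R} {M₁ M₂ : Type u} [AddCommGroup M₁] [Module R M₁]
    [AddCommGroup M₂] [Module R M₂] (h₁ : Subsingleton (N ⟶ ModuleCat.of R M₁))
    (h₂ : Subsingleton (N ⟶ ModuleCat.of R M₂)) :
    Subsingleton (N ⟶ ModuleCat.of R (M₁ × M₂)) := by
  have : Subsingleton (N ⟶ ModuleCat.of R M₁ ⊞ ModuleCat.of R M₂) :=
    ⟨fun _ _ ↦ Limits.biprod.hom_ext _ _ (Subsingleton.elim _ _) (Subsingleton.elim _ _)⟩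
  exact (ModuleCat.biprodIsoProd (.of R M₁) (.of R M₂)).homToEquiv.symm.subsingleton

end Quotients

section VarIdeal

variable {V K : Type*}

/-- The ideal generated by the variables `x_v` with `v ∈ S`; it is a monomial prime when `K` is a
domain. -/
def varIdeal (K : Type*) [CommSemiring K] (S : Set V) : Ideal (MvPolynomial V K) :=
  Ideal.span (X '' S)

lemma mem_varIdeal_iff [CommSemiring K] {S : Set V} {f : MvPolynomial V K} :
    f ∈ varIdeal K S ↔ ∀ m ∈ f.support, ∃ v ∈ S, m v ≠ 0 :=
  mem_ideal_span_X_image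

lemma X_mem_varIdeal [CommSemiring K] {S : Set V} {v : V} (hv : v ∈ S) :
    (X v : MvPolynomial V K) ∈ varIdeal K S :=
  Ideal.subset_span (Set.mem_image_of_mem X hv)

lemma varIdeal_mono [CommSemiring K] {S T : Set V} (h : S ⊆ T) : varIdeal K S ≤ varIdeal K T :=
  Ideal.span_mono (Set.image_mono h)

lemma varIdeal_insert [CommSemiring K] (v : V) (S : Set V) :
    varIdeal K (insert v S) = varIdeal K S ⊔ Ideal.span {X v} := by
  rw [varIdeal, Set.image_insert_eq, Ideal.span_insert, sup_comm, varIdeal]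

lemma varIdeal_ne_top [CommSemiring K] [Nontrivial K] (S : Set V) : varIdeal K S ≠ ⊤ := by
  rw [Ideal.ne_top_iff_one, mem_varIdeal_iff]
  intro h
  simpa using h 0 (by simp)

variable [CommRing K]

lemma isSMulRegular_X_quotient_varIdeal {S : Set V} {v : V} (hv : v ∉ S) :
    IsSMulRegular (MvPolynomial V K ⧸ varIdeal K S) (X v : MvPolynomial V K) := by
  classical
  simp only [isSMulRegular_quotient_iff_mem_of_smul_mem, smul_eq_mul, mem_varIdeal_iff]
  intro f hf m hm
  obtain ⟨w, hw, hmw⟩ := hf (Finsupp.single v 1 + m) (by simpa [support_X_mul] using hm)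
  have : v ≠ w := fun h ↦ hv (h ▸ hw)
  exact ⟨w, hw, by simpa [this] using hmw⟩

lemma hasProjectiveDimensionLE_quotient_varIdeal {S : Set V} (hS : S.Finite) :
    HasProjectiveDimensionLE
      (ModuleCat.of (MvPolynomial V K) (MvPolynomial V K ⧸ varIdeal K S)) S.ncard := by
  induction S, hS using Set.Finite.induction_on with
  | empty =>
    have : Projective (ModuleCat.of (MvPolynomial V K) (MvPolynomial V K)) :=
      ModuleCat.projective_of_free (Module.Basis.singleton Unit _)
    rw [Set.ncard_empty, ← projective_iff_hasProjectiveDimensionLE_zero]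
    exact Projective.of_iso (Submodule.quotEquivOfEqBot _ (by simp [varIdeal])).symm.toModuleIso
      this
  | @insert v S hv hS ih =>
    rw [Set.ncard_insert_of_notMem hv hS, varIdeal_insert]
    exact hasProjectiveDimensionLE_quotient_sup_span (isSMulRegular_X_quotient_varIdeal hv) ih

lemma nontrivial_ext_quotient_varIdeal {S : Set V} (hS : S.Finite) {J : Ideal (MvPolynomial V K)}
    (hSJ : varIdeal K S ≤ J) (hJ : J ≠ ⊤) :
    Nontrivial (Abelian.Ext (ModuleCat.of (MvPolynomial V K) (MvPolynomial V K ⧸ varIdeal K S))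
      (ModuleCat.of _ (MvPolynomial V K ⧸ J)) S.ncard) := by
  induction S, hS using Set.Finite.induction_on with
  | empty =>
    rw [Set.ncard_empty]
    have : Nontrivial (MvPolynomial V K ⧸ J) := Ideal.Quotient.nontrivial_iff.2 hJ
    refine ⟨Abelian.Ext.mk₀ (ModuleCat.ofHom (Submodule.factor hSJ)), 0, fun h ↦ ?_⟩
    rw [Abelian.Ext.mk₀_eq_zero_iff] at h
    obtain ⟨y, hy⟩ := exists_ne (0 : MvPolynomial V K ⧸ J)
    obtain ⟨y, rfl⟩ := Submodule.factor_surjective hSJ y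
    exact hy congr($h y)
  | @insert v S hv hS ih =>
    rw [Set.ncard_insert_of_notMem hv hS, varIdeal_insert]
    exact nontrivial_ext_succ (mulQuotient_shortExact (isSMulRegular_X_quotient_varIdeal hv))
      (smul_id_quotient_eq_zero (hSJ (X_mem_varIdeal (S.mem_insert v))))
      (ih ((varIdeal_mono (S.subset_insert v)).trans hSJ))

lemma projectiveDimension_quotient_varIdeal [Nontrivial K] {S : Set V} (hS : S.Finite) :
    projectiveDimension
      (ModuleCat.of (MvPolynomial V K) (MvPolynomial V K ⧸ varIdeal K S)) = S.ncard := by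
  refine le_antisymm ((projectiveDimension_le_iff _ _).2
    (hasProjectiveDimensionLE_quotient_varIdeal hS)) ((projectiveDimension_ge_iff _ _).2 fun h ↦ ?_)
  obtain ⟨e, e', hne⟩ := nontrivial_ext_quotient_varIdeal hS le_rfl (varIdeal_ne_top (K := K) S)
  exact hne ((h.subsingleton _ _ S.ncard le_rfl _).elim e e')

end VarIdeal

section Multipartite

variable {V ι : Type*}

lemma exists_nonempty_cons_eq {s : Finset ι} (hs : s.Nontrivial) :
    ∃ (t : Finset ι) (i : ι) (hi : i ∉ t), t.Nonempty ∧ t.cons i hi = s := by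
  obtain ⟨t, i, _, j, hj, _, rfl⟩ := hs.exists_cons_eq
  exact ⟨t.cons j hj, i, _, Finset.cons_nonempty hj, rfl⟩

/-- For a colouring `c` of the variables, the intersection over the colours `i ∈ s` of the prime
ideals generated by the variables whose colour is not `i`. For a complete multipartite graph and
all of its parts, this is the primary decomposition of the edge ideal. -/
def multipartiteIdeal (K : Type*) [CommSemiring K] (c : V → ι) (s : Finset ι) :
    Ideal (MvPolynomial V K) :=
  s.inf fun i ↦ varIdeal K {v | c v ≠ i}

lemma mem_multipartiteIdeal_iff {K : Type*} [CommSemiring K] {c : V → ι} {s : Finset ι}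
    {f : MvPolynomial V K} :
    f ∈ multipartiteIdeal K c s ↔ ∀ m ∈ f.support, ∀ i ∈ s, ∃ v, c v ≠ i ∧ m v ≠ 0 := by
  simp only [multipartiteIdeal, Submodule.mem_finsetInf, mem_varIdeal_iff, Set.mem_ofPred_eq]
  exact forall₂_comm

lemma multipartiteIdeal_singleton (K : Type*) [CommSemiring K] (c : V → ι) (i : ι) :
    multipartiteIdeal K c {i} = varIdeal K {v | c v ≠ i} :=
  Finset.inf_singleton

lemma multipartiteIdeal_cons (K : Type*) [CommSemiring K] (c : V → ι) {i : ι} {s : Finset ι}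
    (hi : i ∉ s) :
    multipartiteIdeal K c (s.cons i hi) =
      varIdeal K {v | c v ≠ i} ⊓ multipartiteIdeal K c s :=
  Finset.inf_cons hi

lemma multipartiteIdeal_le_varIdeal_univ (K : Type*) [CommSemiring K] (c : V → ι) {s : Finset ι}
    (hs : s.Nonempty) : multipartiteIdeal K c s ≤ varIdeal K Set.univ :=
  (Finset.inf_le hs.choose_spec).trans (varIdeal_mono (Set.subset_univ _))

lemma varIdeal_sup_multipartiteIdeal (K : Type*) [CommSemiring K] (c : V → ι) {i : ι}
    {s : Finset ι} (hi : i ∉ s) (hs : s.Nonempty) :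
    varIdeal K {v | c v ≠ i} ⊔ multipartiteIdeal K c s = varIdeal K Set.univ := by
  refine le_antisymm (sup_le (varIdeal_mono (Set.subset_univ _))
    (multipartiteIdeal_le_varIdeal_univ K c hs)) (Ideal.span_le.2 ?_)
  rintro _ ⟨v, -, rfl⟩
  by_cases hv : c v = i
  · have hvs : ∀ j ∈ s, c v ≠ j := fun j hj h ↦ hi (hv ▸ h ▸ hj)
    exact Ideal.mem_sup_right (Submodule.mem_finsetInf.2 fun j hj ↦ X_mem_varIdeal (hvs j hj))
  · exact Ideal.mem_sup_left (X_mem_varIdeal hv)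

variable {K : Type*} [CommRing K] {c : V → ι}

lemma hasProjectiveDimensionLE_quotient_varIdeal_ne [Finite V] {n : ℕ} (hV : Nat.card V = n + 1)
    (hc : c.Surjective) (i : ι) :
    HasProjectiveDimensionLE
      (ModuleCat.of (MvPolynomial V K) (MvPolynomial V K ⧸ varIdeal K {v | c v ≠ i})) n := by
  obtain ⟨v, hv⟩ := hc i
  have ne_univ : {v | c v ≠ i} ≠ Set.univ := fun h ↦ (h ▸ Set.mem_univ v : v ∈ {v | c v ≠ i}) hv
  have ncard_le : {v | c v ≠ i}.ncard ≤ n :=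
    Nat.lt_succ_iff.1 ((Set.ncard_lt_card ne_univ).trans_eq hV)
  have := hasProjectiveDimensionLE_quotient_varIdeal (K := K) (Set.toFinite {v | c v ≠ i})
  exact hasProjectiveDimensionLT_of_ge _ _ _ (Nat.succ_le_succ ncard_le)

lemma hasProjectiveDimensionLE_quotient_multipartiteIdeal [Finite V] {n : ℕ}
    (hV : Nat.card V = n + 1) (hc : c.Surjective) {s : Finset ι} (hs : s.Nonempty) :
    HasProjectiveDimensionLE
      (ModuleCat.of (MvPolynomial V K) (MvPolynomial V K ⧸ multipartiteIdeal K c s)) n := by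
  induction hs using Finset.Nonempty.cons_induction with
  | singleton i =>
    rw [multipartiteIdeal_singleton]
    exact hasProjectiveDimensionLE_quotient_varIdeal_ne hV hc i
  | cons i s hi hs ih =>
    rw [multipartiteIdeal_cons]
    have pd_sup := hasProjectiveDimensionLE_quotient_varIdeal (K := K) (Set.finite_univ (α := V))
    rw [Set.ncard_univ, hV, ← varIdeal_sup_multipartiteIdeal K c hi hs] at pd_sup
    have := hasProjectiveDimensionLE_quotient_varIdeal_ne (K := K) hV hc i
    exact (mayerVietoris_shortExact _ _).hasProjectiveDimensionLT_X₁ (n + 1)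
      (hasProjectiveDimensionLE_prod n) pd_sup

lemma projectiveDimension_quotient_multipartiteIdeal [Nontrivial K] [Finite V] {n : ℕ}
    (hV : Nat.card V = n + 1) (hc : c.Surjective) {s : Finset ι} (hs : s.Nontrivial) :
    projectiveDimension
      (ModuleCat.of (MvPolynomial V K) (MvPolynomial V K ⧸ multipartiteIdeal K c s)) = n := by
  obtain ⟨t, i, hi, ht, rfl⟩ := exists_nonempty_cons_eq hs
  rw [multipartiteIdeal_cons]
  have pd_sup := projectiveDimension_quotient_varIdeal (K := K) (Set.finite_univ (α := V))
  rw [Set.ncard_univ, hV, ← varIdeal_sup_multipartiteIdeal K c hi ht] at pd_sup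
  have := hasProjectiveDimensionLE_quotient_varIdeal_ne (K := K) hV hc i
  have := hasProjectiveDimensionLE_quotient_multipartiteIdeal (K := K) hV hc ht
  exact projectiveDimension_X₁_eq (mayerVietoris_shortExact _ _)
    (hasProjectiveDimensionLE_prod n) pd_sup

lemma subsingleton_hom_quotient_varIdeal_ne (hc : c.Surjective) (i : ι)
    {N : ModuleCat (MvPolynomial V K)} (hN : ∀ v, (X v : MvPolynomial V K) • 𝟙 N = 0) :
    Subsingleton (N ⟶ ModuleCat.of _ (MvPolynomial V K ⧸ varIdeal K {v | c v ≠ i})) := by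
  obtain ⟨v, hv⟩ := hc i
  exact subsingleton_hom_of_isSMulRegular (hN v) (isSMulRegular_X_quotient_varIdeal fun h ↦ h hv)

lemma subsingleton_hom_quotient_multipartiteIdeal (hc : c.Surjective) {s : Finset ι}
    (hs : s.Nonempty) {N : ModuleCat (MvPolynomial V K)}
    (hN : ∀ v, (X v : MvPolynomial V K) • 𝟙 N = 0) :
    Subsingleton (N ⟶ ModuleCat.of _ (MvPolynomial V K ⧸ multipartiteIdeal K c s)) := by
  induction hs using Finset.Nonempty.cons_induction with
  | singleton i =>
    rw [multipartiteIdeal_singleton]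
    exact subsingleton_hom_quotient_varIdeal_ne hc i hN
  | cons i s hi _ ih =>
    rw [multipartiteIdeal_cons]
    exact subsingleton_hom_X₁ (mayerVietoris_shortExact _ _)
      (subsingleton_hom_prod (subsingleton_hom_quotient_varIdeal_ne hc i hN) ih)

lemma nontrivial_ext_one_quotient_multipartiteIdeal [Nontrivial K] (hc : c.Surjective)
    {s : Finset ι} (hs : s.Nontrivial) :
    Nontrivial (Abelian.Ext
      (ModuleCat.of (MvPolynomial V K) (MvPolynomial V K ⧸ varIdeal K Set.univ))
      (ModuleCat.of _ (MvPolynomial V K ⧸ multipartiteIdeal K c s)) 1) := by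
  obtain ⟨t, i, hi, ht, rfl⟩ := exists_nonempty_cons_eq hs
  have sup_eq := varIdeal_sup_multipartiteIdeal K c hi ht
  rw [multipartiteIdeal_cons, ← sup_eq]
  have X_smul (v : V) : (X v : MvPolynomial V K) • 𝟙 (ModuleCat.of (MvPolynomial V K)
      (MvPolynomial V K ⧸ varIdeal K {v | c v ≠ i} ⊔ multipartiteIdeal K c t)) = 0 :=
    smul_id_quotient_eq_zero (sup_eq ▸ X_mem_varIdeal (Set.mem_univ v))
  have sup_nontrivial : Nontrivial
      (MvPolynomial V K ⧸ varIdeal K {v | c v ≠ i} ⊔ multipartiteIdeal K c t) :=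
    Ideal.Quotient.nontrivial_iff.2 (sup_eq ▸ varIdeal_ne_top Set.univ)
  refine ⟨_, 0, extClass_ne_zero (mayerVietoris_shortExact _ _) ?_ ?_⟩
  · exact fun h ↦ not_subsingleton_iff_nontrivial.2 sup_nontrivial
      (ModuleCat.isZero_iff_subsingleton.1 h)
  · exact subsingleton_hom_prod (subsingleton_hom_quotient_varIdeal_ne hc i X_smul)
      (subsingleton_hom_quotient_multipartiteIdeal hc ht X_smul)

lemma mdepth_quotient_multipartiteIdeal {K V ι : Type} [CommRing K] [IsNoetherianRing K]
    [Nontrivial K] [Finite V] {c : V → ι} (hc : c.Surjective) {s : Finset ι} (hs : s.Nontrivial) :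
    mdepth (varIdeal K (Set.univ : Set V)) (MvPolynomial V K ⧸ multipartiteIdeal K c s) = 1 := by
  refine mdepth_eq_of_ext (smul_top_quotient_ne_top
    (multipartiteIdeal_le_varIdeal_univ K c hs.nonempty) (varIdeal_ne_top _)) (fun i hi ↦ ?_)
    (nontrivial_ext_one_quotient_multipartiteIdeal hc hs)
  obtain rfl : i = 0 := Nat.lt_one_iff.1 hi
  have hom_subsingleton := subsingleton_hom_quotient_multipartiteIdeal (K := K) hc hs.nonempty
    fun v ↦ smul_id_quotient_eq_zero (X_mem_varIdeal (Set.mem_univ v))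
  exact Abelian.Ext.homEquiv₀.subsingleton

end Multipartite

section CompleteMultipartite

lemma single_add_single_le_iff {σ : Type*} {m : σ →₀ ℕ} {u v : σ} (huv : u ≠ v) :
    Finsupp.single u 1 + Finsupp.single v 1 ≤ m ↔ m u ≠ 0 ∧ m v ≠ 0 := by
  classical
  constructor
  · intro h
    have hu := h u
    have hv := h v
    simp only [Finsupp.add_apply, Finsupp.single_apply] at hu hv
    grind
  · rintro ⟨hu, hv⟩ w
    simp only [Finsupp.add_apply, Finsupp.single_apply]
    grind

variable {V : Type} {G : SimpleGraph V}

lemma edgeIdeal_eq_span_monomial (K : Type) [Field K] (G : SimpleGraph V) :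
    edgeIdeal K G = Ideal.span ((fun m ↦ monomial m (1 : K)) ''
      {m | ∃ u v, G.Adj u v ∧ m = Finsupp.single u 1 + Finsupp.single v 1}) := by
  have X_mul_X (u v : V) : (X u * X v : MvPolynomial V K) =
      monomial (Finsupp.single u 1 + Finsupp.single v 1) 1 := by
    rw [X, X, monomial_mul, one_mul]
  rw [edgeIdeal]
  congr 1
  ext f
  constructor
  · rintro ⟨u, v, huv, rfl⟩
    exact ⟨_, ⟨u, v, huv, rfl⟩, (X_mul_X u v).symm⟩
  · rintro ⟨_, ⟨u, v, huv, rfl⟩, rfl⟩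
    exact ⟨u, v, huv, (X_mul_X u v).symm⟩

lemma mem_edgeIdeal_iff {K : Type} [Field K] {f : MvPolynomial V K} :
    f ∈ edgeIdeal K G ↔ ∀ m ∈ f.support, ∃ u v, G.Adj u v ∧ m u ≠ 0 ∧ m v ≠ 0 := by
  rw [edgeIdeal_eq_span_monomial, mem_ideal_span_monomial_image]
  refine forall₂_congr fun m _ ↦ ⟨?_, ?_⟩
  · rintro ⟨_, ⟨u, v, huv, rfl⟩, hle⟩
    exact ⟨u, v, huv, (single_add_single_le_iff huv.ne).1 hle⟩
  · rintro ⟨u, v, huv, hm⟩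
    exact ⟨_, ⟨u, v, huv, rfl⟩, (single_add_single_le_iff huv.ne).2 hm⟩

lemma edgeIdeal_eq_multipartiteIdeal (K : Type) [Field K] {ι : Type*} [Fintype ι] [Nonempty ι]
    {c : V → ι} (hc : ∀ u v, G.Adj u v ↔ c u ≠ c v) :
    edgeIdeal K G = multipartiteIdeal K c Finset.univ := by
  ext f
  rw [mem_edgeIdeal_iff, mem_multipartiteIdeal_iff]
  refine forall₂_congr fun m _ ↦ ⟨?_, fun h ↦ ?_⟩
  · rintro ⟨u, v, huv, hu, hv⟩ i -
    by_cases hui : c u = i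
    · exact ⟨v, fun hvi ↦ (hc u v).1 huv (hui.trans hvi.symm), hv⟩
    · exact ⟨u, hui, hu⟩
  · obtain ⟨i⟩ := ‹Nonempty ι›
    obtain ⟨u, -, hu⟩ := h i (Finset.mem_univ i)
    obtain ⟨v, hvu, hv⟩ := h (c u) (Finset.mem_univ _)
    exact ⟨u, v, (hc u v).2 hvu.symm, hu, hv⟩

lemma exists_coloring_of_isCompleteMultipartite (hG : IsCompleteMultipartite G) :
    ∃ (k : ℕ) (c : V → Fin k), c.Surjective ∧ ∀ u v, G.Adj u v ↔ c u ≠ c v := by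
  obtain ⟨k, P, nonempty, partition, indep, adj⟩ := hG
  choose c hc hcu using partition
  have mem_iff (v : V) (i : Fin k) : v ∈ P i ↔ c v = i :=
    ⟨fun h ↦ (hcu v i h).symm, fun h ↦ h ▸ hc v⟩
  refine ⟨k, c, fun i ↦ ?_, fun u v ↦ ⟨fun huv h ↦ ?_, fun h ↦ ?_⟩⟩
  · obtain ⟨v, hv⟩ := nonempty i
    exact ⟨v, (mem_iff v i).1 hv⟩
  · exact indep (c u) u (hc u) v ((mem_iff v _).2 h.symm) huv
  · exact adj _ _ h u (hc u) v (hc v)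

end CompleteMultipartite

theorem depth_eq_one_of_isCompleteMultipartite_general
    {K : Type} [Field K] {V : Type} [Finite V] (G : SimpleGraph V)
    (hG : IsCompleteMultipartite G) (hE : G.edgeSet.Nonempty) :
    mdepth (maxIdeal K V) (MvPolynomial V K ⧸ edgeIdeal K G) = 1 ∧
    projDim (MvPolynomial V K)
      (ModuleCat.of (MvPolynomial V K) (MvPolynomial V K ⧸ edgeIdeal K G)) =
        Nat.card V - 1 := by
  obtain ⟨k, c, hc, adj_iff⟩ := exists_coloring_of_isCompleteMultipartite hG
  obtain ⟨⟨u, v⟩, huv⟩ := hE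
  have two_colors : (Finset.univ : Finset (Fin k)).Nontrivial :=
    ⟨c u, by simp, c v, by simp, (adj_iff u v).1 huv⟩
  have : Nonempty (Fin k) := ⟨c u⟩
  have : Nonempty V := ⟨u⟩
  have card_eq : Nat.card V = Nat.card V - 1 + 1 := (Nat.sub_add_cancel Nat.card_pos).symm
  have maxIdeal_eq : maxIdeal K V = varIdeal K Set.univ := by
    rw [maxIdeal, varIdeal, Set.image_univ]
  rw [edgeIdeal_eq_multipartiteIdeal K adj_iff, maxIdeal_eq]
  exact ⟨mdepth_quotient_multipartiteIdeal hc two_colors, projDim_eq_of_projectiveDimension_eq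
    (projectiveDimension_quotient_multipartiteIdeal card_eq hc two_colors)⟩

/-- For a complete multipartite graph `G` on `n` vertices with at least one
edge, `depth(R/I(G)) = 1`; equivalently, `pd(R/I(G)) = n - 1`. -/
theorem depth_eq_one_of_isCompleteMultipartite
    {K : Type} [Field K] {n : ℕ} (G : SimpleGraph (Fin n))
    (hG : IsCompleteMultipartite G) (hE : G.edgeSet.Nonempty) :
    mdepth (maxIdeal K (Fin n)) (MvPolynomial (Fin n) K ⧸ edgeIdeal K G) = 1 ∧
    projDim (MvPolynomial (Fin n) K)
      (ModuleCat.of (MvPolynomial (Fin n) K)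
        (MvPolynomial (Fin n) K ⧸ edgeIdeal K G)) = n - 1 := by
  simpa using depth_eq_one_of_isCompleteMultipartite_general (K := K) G hG hE

end
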